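/- arXiv:1904.11211 — 2 statements merged into one kernel-verified Lean document; each statement's English description precedes it below -/
import Mathlib

section
/- Let V be a finite-dimensional complex inner product space and let C be a linear operator on V with adjoint C*. Then for any u, v ∈ V, u − Cv belongs to the range of 1 − CC* if and only if v − C*u belongs to the range of 1 − C*C. -/
theorem sub_mem_range_aux {V : Type*} [AddCommGroup V] [Module ℂ V]
    (C D : V →ₗ[ℂ] V) (u v : V) (h : u - C v ∈ LinearMap.range (1 - C * D)) :
    v - D u ∈ LinearMap.range (1 - D * C) := by
  obtain ⟨x, hx⟩ := h
  refine ⟨v - D x, ?_⟩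
  have hu : u = C v + (x - C (D x)) := by
    have h2 : x - C (D x) = u - C v := hx
    rw [h2]; abel
  rw [hu]
  simp only [LinearMap.sub_apply, Module.End.one_apply, Module.End.mul_apply, map_sub, map_add]
  abel

/-- For a linear operator `C` on a finite-dimensional complex inner product space and
`u, v ∈ V`: `u - C v ∈ ran (1 - C C*)` if and only if `v - C* u ∈ ran (1 - C* C)`. -/
theorem sub_mem_range_one_sub_iff
    {V : Type*} [NormedAddCommGroup V] [InnerProductSpace ℂ V] [FiniteDimensional ℂ V]
    (C : V →ₗ[ℂ] V) (u v : V) :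
    u - C v ∈ LinearMap.range (1 - C * LinearMap.adjoint C) ↔
      v - LinearMap.adjoint C u ∈ LinearMap.range (1 - LinearMap.adjoint C * C) :=
by
  exact ⟨sub_mem_range_aux C (LinearMap.adjoint C) u v,
    sub_mem_range_aux (LinearMap.adjoint C) C v u⟩
end

section
/- Let μ be a real number with 0 < μ < 1 and let C be the 4×4 complex matrix with rows (μ²,0,0,0), (0,0,μ,0), (0,μ,μ²−1,0), (0,0,0,μ²) (the Pusz–Woronowicz twisted CCR matrix), regarded as a linear operator on ℂ² ⊗ ℂ² ≅ ℂ⁴. Then C satisfies the Yang–Baxter equation C^{12} C^{23} C^{12} = C^{23} C^{12} C^{23} as 8×8 matrices. -/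
open Kronecker

/-- `C ⊗ I₂`, acting on `ℂ⁸ ≅ ℂ⁴ ⊗ ℂ²` (lexicographic index identification). -/
noncomputable def kron12 (C : Matrix (Fin 4) (Fin 4) ℂ) : Matrix (Fin 8) (Fin 8) ℂ :=
  Matrix.reindex finProdFinEquiv finProdFinEquiv (C ⊗ₖ (1 : Matrix (Fin 2) (Fin 2) ℂ))

/-- `I₂ ⊗ C`, acting on `ℂ⁸ ≅ ℂ² ⊗ ℂ⁴` (lexicographic index identification). -/
noncomputable def kron23 (C : Matrix (Fin 4) (Fin 4) ℂ) : Matrix (Fin 8) (Fin 8) ℂ :=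
  Matrix.reindex finProdFinEquiv finProdFinEquiv ((1 : Matrix (Fin 2) (Fin 2) ℂ) ⊗ₖ C)

theorem kron12_eq (m : ℂ) :
    kron12 !![m ^ 2, 0, 0, 0; 0, 0, m, 0; 0, m, m ^ 2 - 1, 0; 0, 0, 0, m ^ 2] =
      !![m ^ 2, 0, 0, 0, 0, 0, 0, 0;
      0, m ^ 2, 0, 0, 0, 0, 0, 0;
      0, 0, 0, 0, m, 0, 0, 0;
      0, 0, 0, 0, 0, m, 0, 0;
      0, 0, m, 0, m ^ 2 - 1, 0, 0, 0;
      0, 0, 0, m, 0, m ^ 2 - 1, 0, 0;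
      0, 0, 0, 0, 0, 0, m ^ 2, 0;
      0, 0, 0, 0, 0, 0, 0, m ^ 2] := by
  ext i j
  fin_cases i <;> fin_cases j <;>
    simp [kron12, finProdFinEquiv, Fin.divNat, Fin.modNat]

theorem kron23_eq (m : ℂ) :
    kron23 !![m ^ 2, 0, 0, 0; 0, 0, m, 0; 0, m, m ^ 2 - 1, 0; 0, 0, 0, m ^ 2] =
      !![m ^ 2, 0, 0, 0, 0, 0, 0, 0;
      0, 0, m, 0, 0, 0, 0, 0;
      0, m, m ^ 2 - 1, 0, 0, 0, 0, 0;
      0, 0, 0, m ^ 2, 0, 0, 0, 0;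
      0, 0, 0, 0, m ^ 2, 0, 0, 0;
      0, 0, 0, 0, 0, 0, m, 0;
      0, 0, 0, 0, 0, m, m ^ 2 - 1, 0;
      0, 0, 0, 0, 0, 0, 0, m ^ 2] := by
  ext i j
  fin_cases i <;> fin_cases j <;>
    simp [kron23, finProdFinEquiv, Fin.divNat, Fin.modNat]

set_option maxHeartbeats 4000000 in
/-- The Pusz–Woronowicz twisted CCR matrix `C` with rows
`(μ²,0,0,0), (0,0,μ,0), (0,μ,μ²−1,0), (0,0,0,μ²)`, `0 < μ < 1`, satisfies the
Yang–Baxter equation `C¹² C²³ C¹² = C²³ C¹² C²³`. -/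
theorem yangBaxter_puszWoronowicz (μ : ℝ) (hμ₁ : 0 < μ) (hμ₂ : μ < 1) :
    kron12 !![(μ : ℂ) ^ 2, 0, 0, 0; 0, 0, (μ : ℂ), 0; 0, (μ : ℂ), (μ : ℂ) ^ 2 - 1, 0;
          0, 0, 0, (μ : ℂ) ^ 2] *
        kron23 !![(μ : ℂ) ^ 2, 0, 0, 0; 0, 0, (μ : ℂ), 0; 0, (μ : ℂ), (μ : ℂ) ^ 2 - 1, 0;
          0, 0, 0, (μ : ℂ) ^ 2] *
        kron12 !![(μ : ℂ) ^ 2, 0, 0, 0; 0, 0, (μ : ℂ), 0; 0, (μ : ℂ), (μ : ℂ) ^ 2 - 1, 0;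
          0, 0, 0, (μ : ℂ) ^ 2] =
      kron23 !![(μ : ℂ) ^ 2, 0, 0, 0; 0, 0, (μ : ℂ), 0; 0, (μ : ℂ), (μ : ℂ) ^ 2 - 1, 0;
          0, 0, 0, (μ : ℂ) ^ 2] *
        kron12 !![(μ : ℂ) ^ 2, 0, 0, 0; 0, 0, (μ : ℂ), 0; 0, (μ : ℂ), (μ : ℂ) ^ 2 - 1, 0;
          0, 0, 0, (μ : ℂ) ^ 2] *
        kron23 !![(μ : ℂ) ^ 2, 0, 0, 0; 0, 0, (μ : ℂ), 0; 0, (μ : ℂ), (μ : ℂ) ^ 2 - 1, 0;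
          0, 0, 0, (μ : ℂ) ^ 2] := by
  rw [kron12_eq, kron23_eq]
  ext i j
  fin_cases i <;> fin_cases j <;>
    simp [Matrix.mul_apply, Fin.sum_univ_succ] <;> ring
end
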